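/- arXiv:2508.04112 — 2 statements merged into one kernel-verified Lean document; each statement's English description precedes it below -/
import Mathlib

section
/- Let m ≥ 2 be even, σ₀ = (−1)^{m/2}, L, T > 0, and let f : ℝ → ℝ be C² with f″ bounded. Let u : [0,T] × ℝ → ℝ be smooth, L-periodic in x, with all partial derivatives bounded, solving ∂_t u + ∂_x f(u) + σ₀ ∂_x^m u = 0. Then there exists C > 0 such that for every τ ∈ (0,1] and every C¹ tuple q = (q₀, …, q_{m−1}), L-periodic in x, solving ∂_t q₀ + ∂_x f(q₀) + σ₀ ∂_x q_{m−1} = 0, τ ∂_t q_j + σ₀ (−1)^j ∂_x q_{m−j−1} = σ₀ (−1)^j q_{m−j} for j ∈ {1, …, m/2 − 1}, and τ ∂_t q_j + σ₀ (−1)^{j+m−1} ∂_x q_{m−j−1} = σ₀ (−1)^{j+m−1} q_{m−j} for j ∈ {m/2, …, m−1}, with initial data q_j(0,·) = ∂_x^j u(0,·) for j = 0, …, m−1, one has sup_{t ∈ [0,T]} [ ‖u(t) − q₀(t)‖_{L²(0,L)} + Σ_{j=1}^{m−1} √τ ‖∂_x^j u(t) − q_j(t)‖_{L²(0,L)} ]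 ≤ C τ. -/
open MeasureTheory

/-- Partial derivative with respect to the first (time) variable. -/
noncomputable def pdt (u : ℝ → ℝ → ℝ) : ℝ → ℝ → ℝ :=
  fun t x => deriv (fun s => u s x) t

/-- Partial derivative with respect to the second (space) variable. -/
noncomputable def pdx (u : ℝ → ℝ → ℝ) : ℝ → ℝ → ℝ :=
  fun t x => deriv (fun y => u t y) x

section PartialDerivatives

variable {g : ℝ → ℝ → ℝ}

lemma hasDerivAt_time_fderiv (hg : ContDiff ℝ 1 (Function.uncurry g)) (t x : ℝ) :
    HasDerivAt (fun s => g s x) (fderiv ℝ (Function.uncurry g) (t, x) (1, 0)) t := by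
  have h := (hg.differentiable one_ne_zero (t, x)).hasFDerivAt
  exact h.comp_hasDerivAt t ((hasDerivAt_id t).prodMk (hasDerivAt_const t x))

lemma hasDerivAt_space_fderiv (hg : ContDiff ℝ 1 (Function.uncurry g)) (t x : ℝ) :
    HasDerivAt (fun y => g t y) (fderiv ℝ (Function.uncurry g) (t, x) (0, 1)) x := by
  have h := (hg.differentiable one_ne_zero (t, x)).hasFDerivAt
  exact h.comp_hasDerivAt x ((hasDerivAt_const x t).prodMk (hasDerivAt_id x))

lemma hasDerivAt_pdt (hg : ContDiff ℝ 1 (Function.uncurry g)) (t x : ℝ) :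
    HasDerivAt (fun s => g s x) (pdt g t x) t :=
  (hasDerivAt_time_fderiv hg t x).differentiableAt.hasDerivAt

lemma hasDerivAt_pdx (hg : ContDiff ℝ 1 (Function.uncurry g)) (t x : ℝ) :
    HasDerivAt (fun y => g t y) (pdx g t x) x :=
  (hasDerivAt_space_fderiv hg t x).differentiableAt.hasDerivAt

lemma uncurry_pdt (hg : ContDiff ℝ 1 (Function.uncurry g)) :
    Function.uncurry (pdt g) = fun p => fderiv ℝ (Function.uncurry g) p (1, 0) :=
  funext fun p => (hasDerivAt_time_fderiv hg p.1 p.2).deriv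

lemma uncurry_pdx (hg : ContDiff ℝ 1 (Function.uncurry g)) :
    Function.uncurry (pdx g) = fun p => fderiv ℝ (Function.uncurry g) p (0, 1) :=
  funext fun p => (hasDerivAt_space_fderiv hg p.1 p.2).deriv

lemma continuous_pdt (hg : ContDiff ℝ 1 (Function.uncurry g)) :
    Continuous (Function.uncurry (pdt g)) := by
  rw [uncurry_pdt hg]
  exact (hg.continuous_fderiv one_ne_zero).clm_apply continuous_const

lemma continuous_pdx (hg : ContDiff ℝ 1 (Function.uncurry g)) :
    Continuous (Function.uncurry (pdx g)) := by
  rw [uncurry_pdx hg]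
  exact (hg.continuous_fderiv one_ne_zero).clm_apply continuous_const

lemma contDiff_one_of_smooth (hg : ContDiff ℝ (⊤ : ℕ∞) (Function.uncurry g)) :
    ContDiff ℝ 1 (Function.uncurry g) :=
  hg.of_le (by exact_mod_cast le_top)

lemma contDiff_pdt (hg : ContDiff ℝ (⊤ : ℕ∞) (Function.uncurry g)) :
    ContDiff ℝ (⊤ : ℕ∞) (Function.uncurry (pdt g)) := by
  rw [uncurry_pdt (contDiff_one_of_smooth hg)]
  exact (hg.fderiv_right (by simp)).clm_apply contDiff_const

lemma contDiff_pdx (hg : ContDiff ℝ (⊤ : ℕ∞) (Function.uncurry g)) :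
    ContDiff ℝ (⊤ : ℕ∞) (Function.uncurry (pdx g)) := by
  rw [uncurry_pdx (contDiff_one_of_smooth hg)]
  exact (hg.fderiv_right (by simp)).clm_apply contDiff_const

lemma contDiff_iterate_pdx (hg : ContDiff ℝ (⊤ : ℕ∞) (Function.uncurry g)) (j : ℕ) :
    ContDiff ℝ (⊤ : ℕ∞) (Function.uncurry (pdx^[j] g)) := by
  induction j with
  | zero => exact hg
  | succ j ih =>
    rw [Function.iterate_succ_apply']
    exact contDiff_pdx ih

lemma periodic_pdt {L : ℝ} (hg : ∀ t, Function.Periodic (g t) L) (t : ℝ) :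
    Function.Periodic (pdt g t) L := fun x => by
  simp only [pdt, fun s => hg s x]

lemma periodic_pdx {L : ℝ} (hg : ∀ t, Function.Periodic (g t) L) (t : ℝ) :
    Function.Periodic (pdx g t) L := fun x => by
  change deriv (g t) (x + L) = deriv (g t) x
  rw [← deriv_comp_add_const]
  exact congrArg (fun h => deriv h x) (funext (hg t))

lemma periodic_iterate_pdx {L : ℝ} (hg : ∀ t, Function.Periodic (g t) L) (j : ℕ) (t : ℝ) :
    Function.Periodic (pdx^[j] g t) L := by
  induction j generalizing t with
  | zero => exact hg t
  | succ j ih =>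
    rw [Function.iterate_succ_apply']
    exact periodic_pdx ih t

lemma exists_bound_on_rectangle (hg : Continuous (Function.uncurry g)) (a b c d : ℝ) :
    ∃ R, ∀ t ∈ Set.Icc a b, ∀ x ∈ Set.Icc c d, |g t x| ≤ R := by
  obtain ⟨R, hR⟩ := (isCompact_Icc.prod isCompact_Icc).exists_bound_of_continuousOn
    (hg.continuousOn (s := Set.Icc a b ×ˢ Set.Icc c d))
  exact ⟨R, fun t ht x hx => hR (t, x) ⟨ht, hx⟩⟩

/-- A finite family of continuous functions has a common bound on a rectangle. -/
lemma exists_common_bound_on_rectangle {G : ℕ → ℝ → ℝ → ℝ} (m : ℕ)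
    (hG : ∀ j < m, Continuous (Function.uncurry (G j))) (a b c d : ℝ) :
    ∃ R, ∀ j < m, ∀ t ∈ Set.Icc a b, ∀ x ∈ Set.Icc c d, |G j t x| ≤ R := by
  induction m with
  | zero => exact ⟨0, fun j hj => absurd hj (Nat.not_lt_zero j)⟩
  | succ m ih =>
    obtain ⟨R, hR⟩ := ih fun j hj => hG j (by lia)
    obtain ⟨R', hR'⟩ := exists_bound_on_rectangle (hG m (by lia)) a b c d
    refine ⟨max R R', fun j hj t ht x hx => ?_⟩
    rcases Nat.lt_succ_iff_lt_or_eq.mp hj with h | rfl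
    · exact le_max_of_le_left (hR j h t ht x hx)
    · exact le_max_of_le_right (hR' t ht x hx)

lemma hasDerivAt_integral_pdt (hg : ContDiff ℝ 1 (Function.uncurry g)) {L : ℝ} (hL : 0 ≤ L)
    (t : ℝ) :
    HasDerivAt (fun s => ∫ x in (0 : ℝ)..L, g s x) (∫ x in (0 : ℝ)..L, pdt g t x) t := by
  obtain ⟨R, hR⟩ := exists_bound_on_rectangle (continuous_pdt hg) (t - 1) (t + 1) 0 L
  have hcont : ∀ s, Continuous (g s) := fun s => hg.continuous.uncurry_left s
  refine (intervalIntegral.hasDerivAt_integral_of_dominated_loc_of_deriv_le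
    (bound := fun _ => R) (s := Set.Icc (t - 1) (t + 1))
    (Icc_mem_nhds (by linarith) (by linarith))
    (Filter.Eventually.of_forall fun s => (hcont s).aestronglyMeasurable)
    ((hcont t).intervalIntegrable 0 L)
    ((continuous_pdt hg).uncurry_left t).aestronglyMeasurable
    (Filter.Eventually.of_forall fun x hx s hs => ?_) intervalIntegrable_const
    (Filter.Eventually.of_forall fun x _ s _ => hasDerivAt_pdt hg s x)).2
  rw [Set.uIoc_of_le hL] at hx
  exact hR s hs x ⟨hx.1.le, hx.2⟩

end PartialDerivatives

/-- Grönwall estimate for a density satisfying a balance law with periodic flux. -/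
lemma integral_le_of_balance_law {e Q Q' : ℝ → ℝ → ℝ} {L T K B : ℝ} (hL : 0 < L)
    (hK : 0 ≤ K) (hB : 0 ≤ B) (he : ContDiff ℝ 1 (Function.uncurry e))
    (hQ : ∀ t x, HasDerivAt (Q t) (Q' t x) x) (hQ' : ∀ t, Continuous (Q' t))
    (hper : ∀ t, Q t L = Q t 0)
    (hle : ∀ t ∈ Set.Icc 0 T, ∀ x ∈ Set.Icc 0 L, pdt e t x ≤ Q' t x + K * e t x + B)
    (he0 : 0 ≤ ∫ x in (0 : ℝ)..L, e 0 x) {t : ℝ} (ht : t ∈ Set.Icc 0 T) :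
    ∫ x in (0 : ℝ)..L, e t x ≤ Real.exp (K * T) * ((∫ x in (0 : ℝ)..L, e 0 x) + B * L * T) := by
  have hT : 0 ≤ T := ht.1.trans ht.2
  set E : ℝ → ℝ := fun s => ∫ x in (0 : ℝ)..L, e s x with hE
  have hE' : ∀ s, HasDerivAt E (∫ x in (0 : ℝ)..L, pdt e s x) s :=
    hasDerivAt_integral_pdt he hL.le
  have hbound : ∀ s ∈ Set.Icc 0 T, ∫ x in (0 : ℝ)..L, pdt e s x ≤ K * E s + B * L := by
    intro s hs
    have hc : Continuous (e s) := he.continuous.uncurry_left s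
    have hflux : ∫ x in (0 : ℝ)..L, Q' s x = 0 := by
      rw [intervalIntegral.integral_eq_sub_of_hasDerivAt (fun x _ => hQ s x)
        ((hQ' s).intervalIntegrable 0 L), hper s, sub_self]
    calc ∫ x in (0 : ℝ)..L, pdt e s x
        ≤ ∫ x in (0 : ℝ)..L, (Q' s x + K * e s x + B) :=
          intervalIntegral.integral_mono_on hL.le
            (((continuous_pdt he).uncurry_left s).intervalIntegrable 0 L)
            (Continuous.intervalIntegrable
              (((hQ' s).add (hc.const_mul K)).add continuous_const) 0 L)
            (hle s hs)
      _ = K * E s + B * L := by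
          rw [intervalIntegral.integral_add (f := fun x => Q' s x + K * e s x)
              (((hQ' s).add (hc.const_mul K)).intervalIntegrable 0 L) intervalIntegrable_const,
            intervalIntegral.integral_add ((hQ' s).intervalIntegrable 0 L)
              ((hc.const_mul K).intervalIntegrable 0 L),
            hflux, intervalIntegral.integral_const_mul, intervalIntegral.integral_const]
          simp [hE]
          ring
  have hA : ∀ s, HasDerivAt (fun s => Real.exp (-(K * s)) * E s - B * L * s)
      (Real.exp (-(K * s)) * -(K * 1) * E s
        + Real.exp (-(K * s)) * (∫ x in (0 : ℝ)..L, pdt e s x) - B * L * 1) s := fun s =>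
    ((((hasDerivAt_id s).const_mul K).neg.exp).mul (hE' s)).sub
      ((hasDerivAt_id s).const_mul (B * L))
  have hanti : AntitoneOn (fun s => Real.exp (-(K * s)) * E s - B * L * s) (Set.Icc 0 T) := by
    refine antitoneOn_of_deriv_nonpos (convex_Icc 0 T)
      (fun s _ => (hA s).continuousAt.continuousWithinAt)
      (fun s _ => (hA s).differentiableAt.differentiableWithinAt) fun s hs => ?_
    have hs' : s ∈ Set.Icc 0 T := interior_subset hs
    rw [(hA s).deriv]
    have h1 : Real.exp (-(K * s)) ≤ 1 :=
      Real.exp_le_one_iff.mpr (neg_nonpos.mpr (mul_nonneg hK hs'.1))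
    have h2 := mul_le_mul_of_nonneg_left (hbound s hs') (Real.exp_pos (-(K * s))).le
    have h3 := mul_le_mul_of_nonneg_right h1 (mul_nonneg hB hL.le)
    linarith
  have h0 := hanti ⟨le_rfl, hT⟩ ht ht.1
  simp only [mul_zero, neg_zero, Real.exp_zero, one_mul, sub_zero] at h0
  have hBL : B * L * t ≤ B * L * T :=
    mul_le_mul_of_nonneg_left ht.2 (mul_nonneg hB hL.le)
  have hEt : Real.exp (-(K * t)) * E t ≤ E 0 + B * L * T := by linarith
  have hexp : Real.exp (K * t) ≤ Real.exp (K * T) :=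
    Real.exp_le_exp.mpr (mul_le_mul_of_nonneg_left ht.2 hK)
  calc E t = Real.exp (K * t) * (Real.exp (-(K * t)) * E t) := by
        rw [← mul_assoc, ← Real.exp_add, add_neg_cancel, Real.exp_zero, one_mul]
    _ ≤ Real.exp (K * t) * (E 0 + B * L * T) :=
        mul_le_mul_of_nonneg_left hEt (Real.exp_pos _).le
    _ ≤ Real.exp (K * T) * (E 0 + B * L * T) :=
        mul_le_mul_of_nonneg_right hexp
          (add_nonneg he0 (mul_nonneg (mul_nonneg hB hL.le) hT))

/-- The sign in front of the spatial terms of the `j`-th equation of the hyperbolic system. -/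
noncomputable def systemSign (m j : ℕ) : ℝ :=
  (-1) ^ (m / 2) * if j < m / 2 then (-1) ^ j else -(-1) ^ j

lemma neg_one_pow_eq_of_even_add {a b : ℕ} (h : Even (a + b)) : (-1 : ℝ) ^ a = (-1) ^ b := by
  rcases Nat.even_or_odd a with ha | ha
  · rw [ha.neg_one_pow, ((Nat.even_add.mp h).mp ha).neg_one_pow]
  · rw [ha.neg_one_pow, (Nat.not_even_iff_odd.mp fun hb =>
      Nat.not_even_iff_odd.mpr ha ((Nat.even_add.mp h).mpr hb)).neg_one_pow]

lemma neg_one_pow_eq_neg_of_odd_add {a b : ℕ} (h : Odd (a + b)) :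
    (-1 : ℝ) ^ a = -(-1) ^ b := by
  rw [neg_one_pow_eq_of_even_add (b := b + 1) (by rw [← add_assoc]; exact h.add_one), pow_succ]
  ring

section SystemSign

variable {m : ℕ}

lemma systemSign_mul_self (j : ℕ) : systemSign m j * systemSign m j = 1 := by
  have h : ∀ i : ℕ, (-1 : ℝ) ^ i * (-1) ^ i = 1 := fun i => by
    rw [← pow_add, Even.neg_one_pow ⟨i, rfl⟩]
  unfold systemSign
  split_ifs <;> linear_combination (-1 : ℝ) ^ j * (-1) ^ j * h (m / 2) + h j

lemma systemSign_zero (hm2 : 2 ≤ m) : systemSign m 0 = (-1) ^ (m / 2) := by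
  simp [systemSign, show 0 < m / 2 by lia]

lemma systemSign_reflect (hm : Even m) {j : ℕ} (hj : j < m) :
    systemSign m (m - 1 - j) = systemSign m j := by
  obtain ⟨k, rfl⟩ := hm
  have hodd : Odd (k + k - 1 - j + j) := ⟨k - 1, by lia⟩
  have hpow : (-1 : ℝ) ^ (k + k - 1 - j) = -(-1) ^ j := neg_one_pow_eq_neg_of_odd_add hodd
  unfold systemSign
  rw [hpow]
  by_cases h : j < (k + k) / 2
  · rw [if_pos h, if_neg (by lia), neg_neg]
  · rw [if_neg h, if_pos (by lia)]

lemma systemSign_pair_nonpos (hm : Even m) {j : ℕ} (hj : j ∈ Finset.Icc 1 (m - 1))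
    (W : ℕ → ℝ) :
    (systemSign m j + systemSign m (m - j)) * (W j * W (m - j)) ≤ 0 := by
  obtain ⟨k, rfl⟩ := hm
  rw [Finset.mem_Icc] at hj
  have hpow : (-1 : ℝ) ^ (k + k - j) = (-1) ^ j :=
    neg_one_pow_eq_of_even_add ⟨k, by lia⟩
  unfold systemSign
  rw [hpow, show (k + k) / 2 = k by lia]
  rcases lt_trichotomy j k with h | rfl | h
  · rw [if_pos h, if_neg (by lia)]
    simp
  · rw [if_neg (by lia), if_neg (by lia), show j + j - j = j by lia]
    have h1 : (-1 : ℝ) ^ j * (-1) ^ j = 1 := by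
      rw [← pow_add, Even.neg_one_pow ⟨j, rfl⟩]
    linear_combination 2 * mul_self_nonneg (W j) - 2 * (W j * W j) * h1
  · rw [if_neg (by lia), if_pos (by lia)]
    simp

lemma systemSign_of_lt {j : ℕ} (hj : j < m / 2) :
    systemSign m j = (-1) ^ (m / 2) * (-1) ^ j := by
  rw [systemSign, if_pos hj]

lemma systemSign_of_le (hm : Even m) {j : ℕ} (hj1 : 1 ≤ j) (hj : m / 2 ≤ j) :
    systemSign m j = (-1) ^ (m / 2) * (-1) ^ (j + m - 1) := by
  obtain ⟨k, rfl⟩ := hm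
  rw [systemSign, if_neg (by lia),
    neg_one_pow_eq_neg_of_odd_add (a := j + (k + k) - 1) (b := j) ⟨j + k - 1, by lia⟩]

end SystemSign

lemma two_mul_sum_reflect {m : ℕ} {s : ℕ → ℝ} (hs : ∀ j < m, s (m - 1 - j) = s j)
    (W X : ℕ → ℝ) :
    2 * ∑ j ∈ Finset.range m, s j * W j * X (m - 1 - j)
      = ∑ j ∈ Finset.range m, s j * (W j * X (m - 1 - j) + X j * W (m - 1 - j)) := by
  have h : ∑ j ∈ Finset.range m, s j * (X j * W (m - 1 - j))
      = ∑ j ∈ Finset.range m, s j * W j * X (m - 1 - j) := by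
    rw [← Finset.sum_range_reflect]
    refine Finset.sum_congr rfl fun j hj => ?_
    have hj' := Finset.mem_range.mp hj
    rw [hs j hj', show m - 1 - (m - 1 - j) = j by lia]
    ring
  simp only [mul_add, Finset.sum_add_distrib, h]
  simp only [mul_assoc]
  ring

lemma sum_source_nonpos {m : ℕ} {s W : ℕ → ℝ}
    (hs : ∀ j ∈ Finset.Icc 1 (m - 1), (s j + s (m - j)) * (W j * W (m - j)) ≤ 0) :
    ∑ j ∈ Finset.Icc 1 (m - 1), s j * W j * W (m - j) ≤ 0 := by
  have h : ∑ j ∈ Finset.Icc 1 (m - 1), s (m - j) * (W j * W (m - j))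
      = ∑ j ∈ Finset.Icc 1 (m - 1), s j * W j * W (m - j) := by
    refine Finset.sum_nbij' (fun j => m - j) (fun j => m - j) ?_ ?_ ?_ ?_ ?_
    · intro j hj
      simp only [Finset.mem_Icc] at hj ⊢
      lia
    · intro j hj
      simp only [Finset.mem_Icc] at hj ⊢
      lia
    · intro j hj
      rw [Finset.mem_Icc] at hj
      lia
    · intro j hj
      rw [Finset.mem_Icc] at hj
      lia
    · intro j hj
      rw [Finset.mem_Icc] at hj
      rw [show m - (m - j) = j by lia]
      ring
  have h2 := Finset.sum_nonpos hs
  simp only [add_mul, Finset.sum_add_distrib] at h2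
  rw [h] at h2
  simp only [← mul_assoc] at h2
  linarith

lemma range_eq_insert_zero_Icc {m : ℕ} (hm : 1 ≤ m) :
    Finset.range m = insert 0 (Finset.Icc 1 (m - 1)) := by
  ext j
  simp only [Finset.mem_range, Finset.mem_insert, Finset.mem_Icc]
  lia

/-- Pointwise bound for the time derivative of the energy density: the values `W j`, `X j`, `D j`
stand for the error and its space and time derivatives, `κ` and `d j` for the residuals, `η` for
the flux part of the nonlinearity and `ρ` for its quadratic remainder. -/
lemma energy_density_rate_le {m : ℕ} (hm : 1 ≤ m) {s W X D d : ℕ → ℝ} {τ R M κ η ρ : ℝ}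
    (hτ : 0 ≤ τ) (hτ1 : τ ≤ 1) (hRM : 0 ≤ M * R)
    (hrefl : ∀ j < m, s (m - 1 - j) = s j)
    (hpair : ∀ j ∈ Finset.Icc 1 (m - 1), (s j + s (m - j)) * (W j * W (m - j)) ≤ 0)
    (h0 : W 0 * D 0 = -(η + ρ) - s 0 * W 0 * X (m - 1) - τ * κ * W 0)
    (hj : ∀ j ∈ Finset.Icc 1 (m - 1),
      τ * D j + s j * (X (m - 1 - j) - W (m - j)) = -τ ^ 2 * d j)
    (hκ : |κ| ≤ R) (hρ : |ρ| ≤ M * R * W 0 ^ 2) (hd : ∀ j ∈ Finset.Icc 1 (m - 1), |d j| ≤ R) :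
    2 * W 0 * D 0 + ∑ j ∈ Finset.Icc 1 (m - 1), τ * (2 * W j * D j)
      ≤ -2 * η - ∑ j ∈ Finset.range m, s j * (W j * X (m - 1 - j) + X j * W (m - 1 - j))
        + (2 * (M * R) + 1) * (W 0 ^ 2 + ∑ j ∈ Finset.Icc 1 (m - 1), τ * W j ^ 2)
        + m * R ^ 2 * τ ^ 2 := by
  have hterm : ∀ j ∈ Finset.Icc 1 (m - 1), τ * (2 * W j * D j)
      ≤ -2 * (s j * W j * X (m - 1 - j)) + 2 * (s j * W j * W (m - j)) + τ * W j ^ 2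
        + R ^ 2 * τ ^ 2 := by
    intro j hjm
    have h1 : d j ^ 2 ≤ R ^ 2 := sq_le_sq' (abs_le.mp (hd j hjm)).1 (abs_le.mp (hd j hjm)).2
    have h2 : τ ^ 3 * d j ^ 2 ≤ τ ^ 2 * R ^ 2 := by
      have h3 : τ ^ 3 ≤ τ ^ 2 := pow_le_pow_of_le_one hτ hτ1 (by norm_num)
      exact mul_le_mul h3 h1 (sq_nonneg _) (sq_nonneg _)
    have h4 : 0 ≤ τ * (W j + τ * d j) ^ 2 := mul_nonneg hτ (sq_nonneg _)
    linear_combination 2 * W j * hj j hjm + h2 + h4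
  have hsum := Finset.sum_le_sum hterm
  simp only [Finset.sum_add_distrib, ← Finset.mul_sum, Finset.sum_const, Nat.card_Icc,
    nsmul_eq_mul] at hsum
  have hsrc := sum_source_nonpos hpair
  have hflux := two_mul_sum_reflect hrefl W X
  rw [range_eq_insert_zero_Icc hm, Finset.sum_insert (by simp)] at hflux
  rw [range_eq_insert_zero_Icc hm]
  have hcard : ((m - 1 + 1 - 1 : ℕ) : ℝ) = m - 1 := by
    rw [show m - 1 + 1 - 1 = m - 1 by lia, Nat.cast_sub hm, Nat.cast_one]
  rw [hcard] at hsum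
  have hκ2 : τ ^ 2 * κ ^ 2 ≤ τ ^ 2 * R ^ 2 :=
    mul_le_mul_of_nonneg_left (sq_le_sq' (abs_le.mp hκ).1 (abs_le.mp hκ).2) (sq_nonneg _)
  have hS : 0 ≤ 2 * (M * R) * ∑ j ∈ Finset.Icc 1 (m - 1), τ * W j ^ 2 :=
    mul_nonneg (by linarith) (Finset.sum_nonneg fun j _ => mul_nonneg hτ (sq_nonneg _))
  rw [← Finset.mul_sum] at hS ⊢
  rw [← Finset.mul_sum]
  rw [Nat.sub_zero] at hflux
  linear_combination 2 * h0 + hsum + 2 * hsrc - hflux + hκ2 + hS + sq_nonneg (W 0 + τ * κ)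
    + 2 * (abs_le.mp hρ).1

lemma abs_taylor_remainder_le {f : ℝ → ℝ} (hf : ContDiff ℝ 2 f) {M : ℝ}
    (hM : ∀ x, |deriv (deriv f) x| ≤ M) (a b : ℝ) :
    |f b - f a - deriv f a * (b - a)| ≤ M * (b - a) ^ 2 := by
  have hf1 : Differentiable ℝ f := hf.differentiable two_ne_zero
  have hf2 : Differentiable ℝ (deriv f) :=
    (contDiff_succ_iff_deriv (n := 1).mp hf).2.2.differentiable one_ne_zero
  have hM0 : 0 ≤ M := (abs_nonneg _).trans (hM 0)
  have hlip : ∀ x, |deriv f x - deriv f a| ≤ M * |x - a| := fun x =>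
    convex_univ.norm_image_sub_le_of_norm_deriv_le (fun y _ => hf2 y) (fun y _ => hM y)
      (Set.mem_univ a) (Set.mem_univ x)
  have h := (convex_uIcc a b).norm_image_sub_le_of_norm_hasDerivWithin_le
    (f := fun x => f x - deriv f a * x) (f' := fun x => deriv f x - deriv f a * 1)
    (C := M * |b - a|)
    (fun x _ => ((hf1 x).hasDerivAt.sub ((hasDerivAt_id x).const_mul _)).hasDerivWithinAt)
    (fun x hx => by
      rw [mul_one]
      exact (hlip x).trans
        (mul_le_mul_of_nonneg_left (Set.abs_sub_left_of_mem_uIcc hx) hM0))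
    Set.left_mem_uIcc Set.right_mem_uIcc
  rw [Real.norm_eq_abs, Real.norm_eq_abs, mul_assoc, abs_mul_abs_self, ← sq] at h
  convert h using 2
  ring

/-- First-order correctors: replacing `∂_x^j u` by `∂_x^j u + τ * corrector m u j` lowers the
residual of the hyperbolic system from order `τ` to order `τ ^ 2`. -/
noncomputable def corrector (m : ℕ) (u : ℝ → ℝ → ℝ) : ℕ → ℝ → ℝ → ℝ
  | 0 => fun _ _ => 0
  | k + 1 => fun t x => pdx (corrector m u k) t x
      + systemSign m (m - 1 - k) * pdt (pdx^[m - 1 - k] u) t x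

/-- The error of the hyperbolic approximation relative to the corrected solution. -/
noncomputable def correctedError (m : ℕ) (u : ℝ → ℝ → ℝ) (τ : ℝ) (q : ℕ → ℝ → ℝ → ℝ) (j : ℕ) :
    ℝ → ℝ → ℝ :=
  fun t x => q j t x - pdx^[j] u t x - τ * corrector m u j t x

section CorrectedError

variable {m : ℕ} {u : ℝ → ℝ → ℝ} {τ : ℝ} {q : ℕ → ℝ → ℝ → ℝ}

lemma contDiff_corrector (hu : ContDiff ℝ (⊤ : ℕ∞) (Function.uncurry u)) (j : ℕ) :
    ContDiff ℝ (⊤ : ℕ∞) (Function.uncurry (corrector m u j)) := by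
  induction j with
  | zero => exact contDiff_const
  | succ j ih =>
    exact (contDiff_pdx ih).add
      (contDiff_const.mul (contDiff_pdt (contDiff_iterate_pdx hu _)))

lemma periodic_corrector {L : ℝ} (hu : ∀ t, Function.Periodic (u t) L) (j : ℕ) (t : ℝ) :
    Function.Periodic (corrector m u j t) L := by
  induction j generalizing t with
  | zero => exact fun x => rfl
  | succ j ih =>
    intro x
    simp only [corrector]
    rw [periodic_pdx ih t x, periodic_pdt (periodic_iterate_pdx hu _) t x]

lemma corrector_reflect {j : ℕ} (hj : j ∈ Finset.Icc 1 (m - 1)) (t x : ℝ) :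
    corrector m u (m - j) t x
      = pdx (corrector m u (m - 1 - j)) t x + systemSign m j * pdt (pdx^[j] u) t x := by
  rw [Finset.mem_Icc] at hj
  obtain ⟨k, hk⟩ : ∃ k, k = m - 1 - j := ⟨_, rfl⟩
  rw [← hk, show m - j = k + 1 by lia]
  simp only [corrector]
  rw [show m - 1 - k = j by lia]

lemma contDiff_correctedError (hu : ContDiff ℝ (⊤ : ℕ∞) (Function.uncurry u)) {j : ℕ}
    (hq : ContDiff ℝ 1 (Function.uncurry (q j))) :
    ContDiff ℝ 1 (Function.uncurry (correctedError m u τ q j)) :=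
  (hq.sub (contDiff_one_of_smooth (contDiff_iterate_pdx hu j))).sub
    (contDiff_const.mul (contDiff_one_of_smooth (contDiff_corrector hu j)))

lemma periodic_correctedError {L : ℝ} (hu : ∀ t, Function.Periodic (u t) L) {j : ℕ}
    (hq : ∀ t, Function.Periodic (q j t) L) (t : ℝ) :
    Function.Periodic (correctedError m u τ q j t) L := fun x => by
  simp only [correctedError]
  rw [hq t x, periodic_iterate_pdx hu j t x, periodic_corrector hu j t x]

lemma pdt_correctedError (hu : ContDiff ℝ (⊤ : ℕ∞) (Function.uncurry u)) {j : ℕ}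
    (hq : ContDiff ℝ 1 (Function.uncurry (q j))) (t x : ℝ) :
    pdt (correctedError m u τ q j) t x
      = pdt (q j) t x - pdt (pdx^[j] u) t x - τ * pdt (corrector m u j) t x :=
  (((hasDerivAt_pdt hq t x).sub
    (hasDerivAt_pdt (contDiff_one_of_smooth (contDiff_iterate_pdx hu j)) t x)).sub
    ((hasDerivAt_pdt (contDiff_one_of_smooth (contDiff_corrector hu j)) t x).const_mul τ)).deriv

lemma pdx_correctedError (hu : ContDiff ℝ (⊤ : ℕ∞) (Function.uncurry u)) {j : ℕ}
    (hq : ContDiff ℝ 1 (Function.uncurry (q j))) (t x : ℝ) :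
    pdx (correctedError m u τ q j) t x
      = pdx (q j) t x - pdx^[j + 1] u t x - τ * pdx (corrector m u j) t x := by
  rw [Function.iterate_succ_apply']
  exact (((hasDerivAt_pdx hq t x).sub
    (hasDerivAt_pdx (contDiff_one_of_smooth (contDiff_iterate_pdx hu j)) t x)).sub
    ((hasDerivAt_pdx (contDiff_one_of_smooth (contDiff_corrector hu j)) t x).const_mul τ)).deriv

lemma correctedError_zero (t x : ℝ) : correctedError m u τ q 0 t x = q 0 t x - u t x := by
  simp [correctedError, corrector]

/-- The residual of the corrected error in the relaxation equations is of order `τ ^ 2`. -/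
lemma correctedError_relaxation (hu : ContDiff ℝ (⊤ : ℕ∞) (Function.uncurry u))
    (hq : ∀ j < m, ContDiff ℝ 1 (Function.uncurry (q j))) {j : ℕ}
    (hj : j ∈ Finset.Icc 1 (m - 1)) {t x : ℝ}
    (heq : τ * pdt (q j) t x + systemSign m j * (pdx (q (m - 1 - j)) t x - q (m - j) t x) = 0) :
    τ * pdt (correctedError m u τ q j) t x
        + systemSign m j * (pdx (correctedError m u τ q (m - 1 - j)) t x
          - correctedError m u τ q (m - j) t x)
      = -τ ^ 2 * pdt (corrector m u j) t x := by
  have hj' := Finset.mem_Icc.mp hj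
  rw [pdt_correctedError hu (hq j (by lia)), pdx_correctedError hu (hq (m - 1 - j) (by lia)),
    correctedError, corrector_reflect hj, show m - 1 - j + 1 = m - j by lia]
  linear_combination heq + τ * pdt (pdx^[j] u) t x * systemSign_mul_self (m := m) j

end CorrectedError

lemma pdx_comp {f : ℝ → ℝ} (hf : Differentiable ℝ f) {g : ℝ → ℝ → ℝ}
    (hg : ContDiff ℝ 1 (Function.uncurry g)) (t x : ℝ) :
    pdx (fun s y => f (g s y)) t x = deriv f (g t x) * pdx g t x :=
  ((hf (g t x)).hasDerivAt.comp x (hasDerivAt_pdx hg t x)).deriv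

/-- Energy estimate for the corrected error. -/
lemma integral_energy_le {m : ℕ} (hm : Even m) (hm2 : 2 ≤ m) {L T : ℝ} (hL : 0 < L)
    {f : ℝ → ℝ} (hf : ContDiff ℝ 2 f) {M : ℝ} (hM : ∀ x, |deriv (deriv f) x| ≤ M)
    {u : ℝ → ℝ → ℝ} (hu : ContDiff ℝ (⊤ : ℕ∞) (Function.uncurry u))
    (huper : ∀ t, Function.Periodic (u t) L)
    (hueq : ∀ t ∈ Set.Icc 0 T, ∀ x,
      pdt u t x + pdx (fun s y => f (u s y)) t x + systemSign m 0 * pdx^[m] u t x = 0)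
    {R : ℝ} (hux : ∀ t ∈ Set.Icc 0 T, ∀ x ∈ Set.Icc 0 L, |pdx u t x| ≤ R)
    (hc : ∀ j < m, ∀ t ∈ Set.Icc 0 T, ∀ x ∈ Set.Icc 0 L, |corrector m u j t x| ≤ R)
    (hct : ∀ j < m, ∀ t ∈ Set.Icc 0 T, ∀ x ∈ Set.Icc 0 L, |pdt (corrector m u j) t x| ≤ R)
    (hcx : ∀ j < m, ∀ t ∈ Set.Icc 0 T, ∀ x ∈ Set.Icc 0 L, |pdx (corrector m u j) t x| ≤ R)
    {τ : ℝ} (hτ : τ ∈ Set.Ioc 0 1) {q : ℕ → ℝ → ℝ → ℝ}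
    (hq : ∀ j < m, ContDiff ℝ 1 (Function.uncurry (q j)))
    (hqper : ∀ j < m, ∀ t, Function.Periodic (q j t) L)
    (hq0 : ∀ t ∈ Set.Icc 0 T, ∀ x,
      pdt (q 0) t x + pdx (fun s y => f (q 0 s y)) t x
        + systemSign m 0 * pdx (q (m - 1)) t x = 0)
    (hqj : ∀ j ∈ Finset.Icc 1 (m - 1), ∀ t ∈ Set.Icc 0 T, ∀ x,
      τ * pdt (q j) t x + systemSign m j * (pdx (q (m - 1 - j)) t x - q (m - j) t x) = 0)
    (hinit : ∀ j < m, ∀ x, q j 0 x = pdx^[j] u 0 x) {t : ℝ} (ht : t ∈ Set.Icc 0 T) :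
    ∫ x in (0 : ℝ)..L, (correctedError m u τ q 0 t x ^ 2
        + ∑ j ∈ Finset.Icc 1 (m - 1), τ * correctedError m u τ q j t x ^ 2)
      ≤ Real.exp ((2 * (M * R) + 1) * T) * (m * R ^ 2 * L * (1 + T)) * τ ^ 2 := by
  have hT : 0 ≤ T := ht.1.trans ht.2
  have hM0 : 0 ≤ M := (abs_nonneg _).trans (hM 0)
  have hR0 : 0 ≤ R := (abs_nonneg _).trans (hux t ht 0 ⟨le_rfl, hL.le⟩)
  have hfd : Differentiable ℝ f := hf.differentiable two_ne_zero
  have hfd' : Continuous (deriv f) := hf.continuous_deriv (by norm_num)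
  have hu1 := contDiff_one_of_smooth hu
  set w := correctedError m u τ q with hw
  have hw1 : ∀ j < m, ContDiff ℝ 1 (Function.uncurry (w j)) := fun j hj =>
    contDiff_correctedError hu (hq j hj)
  have hwper : ∀ j < m, ∀ t, Function.Periodic (w j t) L := fun j hj =>
    periodic_correctedError huper (hqper j hj)
  have hlt : ∀ j ∈ Finset.Icc 1 (m - 1), j < m := fun j hj => by
    have := Finset.mem_Icc.mp hj
    lia
  set F : ℝ → ℝ := fun y => ∫ z in (0 : ℝ)..y, f z
  have hF : ∀ y, HasDerivAt F (f y) y := fun y => hf.continuous.integral_hasStrictDerivAt 0 y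
    |>.hasDerivAt
  set η : ℝ → ℝ → ℝ := fun t x =>
    w 0 t x * (deriv f (q 0 t x) * pdx (q 0) t x) - (f (q 0 t x) - f (u t x)) * pdx u t x
  have hrate : ∀ t x, HasDerivAt
      (fun s => w 0 s x ^ 2 + ∑ j ∈ Finset.Icc 1 (m - 1), τ * w j s x ^ 2)
      (2 * w 0 t x * pdt (w 0) t x
        + ∑ j ∈ Finset.Icc 1 (m - 1), τ * (2 * w j t x * pdt (w j) t x)) t := by
    intro t x
    have hsq : ∀ j < m, HasDerivAt (fun s => w j s x ^ 2) (2 * w j t x * pdt (w j) t x) t :=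
      fun j hj => by simpa using (hasDerivAt_pdt (hw1 j hj) t x).fun_pow 2
    exact (hsq 0 (by lia)).add
      (HasDerivAt.fun_sum fun j hj => (hsq j (hlt j hj)).const_mul τ)
  have hE0 : ∀ x ∈ Set.Icc 0 L,
      w 0 0 x ^ 2 + ∑ j ∈ Finset.Icc 1 (m - 1), τ * w j 0 x ^ 2 ≤ m * R ^ 2 * τ ^ 2 := by
    intro x hx
    have hw0 : w 0 0 x = 0 := by
      rw [hw, correctedError_zero, hinit 0 (by lia)]
      simp
    have hwj : ∀ j ∈ Finset.Icc 1 (m - 1), τ * w j 0 x ^ 2 ≤ R ^ 2 * τ ^ 2 := by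
      intro j hj
      have h1 := hc j (hlt j hj) 0 ⟨le_rfl, hT⟩ x hx
      have h2 : corrector m u j 0 x ^ 2 ≤ R ^ 2 := sq_le_sq' (abs_le.mp h1).1 (abs_le.mp h1).2
      have h3 : τ ^ 3 ≤ τ ^ 2 := pow_le_pow_of_le_one hτ.1.le hτ.2 (by norm_num)
      have h4 : w j 0 x = -(τ * corrector m u j 0 x) := by
        rw [hw, correctedError, hinit j (hlt j hj)]
        ring
      rw [h4]
      linear_combination mul_le_mul h3 h2 (sq_nonneg _) (sq_nonneg τ)
    have hs := Finset.sum_le_card_nsmul _ _ _ hwj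
    rw [Nat.card_Icc, nsmul_eq_mul] at hs
    have hcard : ((m - 1 + 1 - 1 : ℕ) : ℝ) ≤ m := Nat.cast_le.mpr (by lia)
    have := mul_le_mul_of_nonneg_right hcard (mul_nonneg (sq_nonneg R) (sq_nonneg τ))
    rw [hw0]
    linarith
  have he1 : ContDiff ℝ 1 (Function.uncurry fun s x =>
      w 0 s x ^ 2 + ∑ j ∈ Finset.Icc 1 (m - 1), τ * w j s x ^ 2) :=
    ((hw1 0 (by lia)).pow 2).add
      (ContDiff.sum fun j hj => contDiff_const.mul ((hw1 j (hlt j hj)).pow 2))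
  have key := integral_le_of_balance_law (L := L) (T := T) (K := 2 * (M * R) + 1)
    (B := m * R ^ 2 * τ ^ 2)
    (Q := fun s x => -2 * (w 0 s x * f (q 0 s x) - F (q 0 s x) + F (u s x))
      - ∑ j ∈ Finset.range m, systemSign m j * (w j s x * w (m - 1 - j) s x))
    (Q' := fun s x => -2 * η s x - ∑ j ∈ Finset.range m, systemSign m j *
      (w j s x * pdx (w (m - 1 - j)) s x + pdx (w j) s x * w (m - 1 - j) s x))
    hL (by positivity) (by positivity) he1 ?_ ?_ ?_ ?_ ?_ ht
  · refine key.trans ?_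
    have hint : ∫ x in (0 : ℝ)..L,
        (w 0 0 x ^ 2 + ∑ j ∈ Finset.Icc 1 (m - 1), τ * w j 0 x ^ 2)
          ≤ m * R ^ 2 * τ ^ 2 * L := by
      have := intervalIntegral.integral_mono_on (μ := volume) hL.le
        ((he1.continuous.uncurry_left 0).intervalIntegrable 0 L)
        intervalIntegrable_const hE0
      rw [intervalIntegral.integral_const, smul_eq_mul] at this
      linarith
    have := mul_le_mul_of_nonneg_left hint (Real.exp_pos ((2 * (M * R) + 1) * T)).le
    linarith
  · intro s x
    have hprod : HasDerivAt
        (fun y => ∑ j ∈ Finset.range m, systemSign m j * (w j s y * w (m - 1 - j) s y))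
        (∑ j ∈ Finset.range m, systemSign m j *
          (pdx (w j) s x * w (m - 1 - j) s x + w j s x * pdx (w (m - 1 - j)) s x)) x :=
      HasDerivAt.fun_sum fun j hj =>
        ((hasDerivAt_pdx (hw1 j (Finset.mem_range.mp hj)) s x).mul
          (hasDerivAt_pdx (hw1 (m - 1 - j) (by lia)) s x)).const_mul _
    have hq0x := hasDerivAt_pdx (hq 0 (by lia)) s x
    have hH := (((hasDerivAt_pdx (hw1 0 (by lia)) s x).mul
      ((hfd (q 0 s x)).hasDerivAt.comp x hq0x)).sub ((hF (q 0 s x)).comp x hq0x)).add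
      ((hF (u s x)).comp x (hasDerivAt_pdx hu1 s x))
    refine ((hH.const_mul (-2)).sub hprod).congr_deriv ?_
    have hw0x : pdx (w 0) s x = pdx (q 0) s x - pdx u s x := by
      rw [hw, pdx_correctedError hu (hq 0 (by lia))]
      simp [corrector, pdx]
    congr 1
    · simp only [η, hw0x, Function.comp]
      ring
    · exact Finset.sum_congr rfl fun j _ => by rw [add_comm]
  · intro s
    have hcw : ∀ j < m, Continuous (w j s) := fun j hj => (hw1 j hj).continuous.uncurry_left s
    have hcwx : ∀ j < m, Continuous (pdx (w j) s) := fun j hj =>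
      (continuous_pdx (hw1 j hj)).uncurry_left s
    have hcq : Continuous (q 0 s) := (hq 0 (by lia)).continuous.uncurry_left s
    have hcu : Continuous (u s) := hu1.continuous.uncurry_left s
    have hη : Continuous (η s) :=
      ((hcw 0 (by lia)).mul ((hfd'.comp hcq).mul
        ((continuous_pdx (hq 0 (by lia))).uncurry_left s))).sub
        (((hf.continuous.comp hcq).sub (hf.continuous.comp hcu)).mul
          ((continuous_pdx hu1).uncurry_left s))
    exact (hη.const_mul (-2)).sub (continuous_finsetSum _ fun j hj =>
      (((hcw j (Finset.mem_range.mp hj)).mul (hcwx (m - 1 - j) (by lia))).add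
        ((hcwx j (Finset.mem_range.mp hj)).mul (hcw (m - 1 - j) (by lia)))).const_mul _)
  · intro s
    have hq0L : q 0 s L = q 0 s 0 := (hqper 0 (by lia) s).eq
    have huL : u s L = u s 0 := (huper s).eq
    have hwL : ∀ j < m, w j s L = w j s 0 := fun j hj => (hwper j hj s).eq
    simp only [hq0L, huL, hwL 0 (by lia)]
    congr 1
    exact Finset.sum_congr rfl fun j hj => by
      rw [hwL j (Finset.mem_range.mp hj), hwL (m - 1 - j) (by lia)]
  · intro s hs x hx
    refine (hrate s x).deriv.le.trans ?_
    refine energy_density_rate_le (s := systemSign m) (W := fun j => w j s x)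
      (X := fun j => pdx (w j) s x) (D := fun j => pdt (w j) s x)
      (d := fun j => pdt (corrector m u j) s x)
      (κ := systemSign m 0 * pdx (corrector m u (m - 1)) s x)
      (ρ := (f (q 0 s x) - f (u s x) - deriv f (u s x) * (q 0 s x - u s x)) * pdx u s x)
      (by lia) hτ.1.le hτ.2 (mul_nonneg hM0 hR0) (fun j hj => systemSign_reflect hm hj)
      (fun j hj => systemSign_pair_nonpos hm hj fun i => w i s x) ?_
      (fun j hj => correctedError_relaxation hu hq hj (hqj j hj s hs x)) ?_ ?_
      (fun j hj => hct j (hlt j hj) s hs x hx)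
    · have h1 := hq0 s hs x
      have h2 := hueq s hs x
      rw [pdx_comp hfd (hq 0 (by lia))] at h1
      rw [pdx_comp hfd hu1] at h2
      have hD : pdt (w 0) s x = pdt (q 0) s x - pdt u s x := by
        rw [hw, pdt_correctedError hu (hq 0 (by lia))]
        simp [corrector, pdt]
      have hX : pdx (w (m - 1)) s x = pdx (q (m - 1)) s x - pdx^[m] u s x
          - τ * pdx (corrector m u (m - 1)) s x := by
        rw [hw, pdx_correctedError hu (hq (m - 1) (by lia)), show m - 1 + 1 = m by lia]
      have hw0 : w 0 s x = q 0 s x - u s x := correctedError_zero s x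
      simp only [η, hD, hX, hw0]
      linear_combination (q 0 s x - u s x) * (h1 - h2)
    · have hs1 : |systemSign m 0| = 1 := by
        rw [systemSign_zero hm2, abs_pow, abs_neg, abs_one, one_pow]
      rw [abs_mul, hs1, one_mul]
      exact hcx (m - 1) (by lia) s hs x hx
    · have hw0 : w 0 s x = q 0 s x - u s x := correctedError_zero s x
      rw [abs_mul, hw0, mul_right_comm]
      exact mul_le_mul (abs_taylor_remainder_le hf hM _ _) (hux s hs x hx) (abs_nonneg _)
        (mul_nonneg hM0 (sq_nonneg _))
  · exact intervalIntegral.integral_nonneg hL.le fun x _ => add_nonneg (sq_nonneg _)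
      (Finset.sum_nonneg fun j _ => mul_nonneg hτ.1.le (sq_nonneg _))

/-- Convergence of the generalized even-order hyperbolic approximation of
`∂_t u + ∂_x f(u) + σ₀ ∂_x^m u = 0` with `σ₀ = (-1)^(m/2)` (Theorem 3.3 of the
paper, for classical solutions of the hyperbolic approximation). -/
theorem even_order_hyperbolic_convergence
    (m : ℕ) (hm : Even m) (hm2 : 2 ≤ m)
    (σ₀ : ℝ) (hσ : σ₀ = (-1 : ℝ) ^ (m / 2))
    (L T : ℝ) (hL : 0 < L) (hT : 0 < T)
    (f : ℝ → ℝ) (hf : ContDiff ℝ 2 f)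
    (hf'' : ∃ M, ∀ x : ℝ, |deriv (deriv f) x| ≤ M)
    (u : ℝ → ℝ → ℝ) (hu : ContDiff ℝ (⊤ : ℕ∞) (Function.uncurry u))
    (huper : ∀ t, Function.Periodic (u t) L)
    (hubd : ∀ i j : ℕ, ∃ M, ∀ t x : ℝ, |pdt^[i] (pdx^[j] u) t x| ≤ M)
    (hueq : ∀ t ∈ Set.Icc (0:ℝ) T, ∀ x : ℝ,
      pdt u t x + pdx (fun s y => f (u s y)) t x + σ₀ * pdx^[m] u t x = 0) :
    ∃ C > 0, ∀ τ ∈ Set.Ioc (0:ℝ) 1, ∀ q : ℕ → ℝ → ℝ → ℝ,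
      (∀ j < m, ContDiff ℝ 1 (Function.uncurry (q j))) →
      (∀ j < m, ∀ t, Function.Periodic (q j t) L) →
      (∀ t ∈ Set.Icc (0:ℝ) T, ∀ x : ℝ,
        pdt (q 0) t x + pdx (fun s y => f (q 0 s y)) t x
          + σ₀ * pdx (q (m - 1)) t x = 0) →
      (∀ j ∈ Finset.Icc 1 (m / 2 - 1), ∀ t ∈ Set.Icc (0:ℝ) T, ∀ x : ℝ,
        τ * pdt (q j) t x + σ₀ * (-1 : ℝ) ^ j * pdx (q (m - j - 1)) t x
          = σ₀ * (-1 : ℝ) ^ j * q (m - j) t x) →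
      (∀ j ∈ Finset.Icc (m / 2) (m - 1), ∀ t ∈ Set.Icc (0:ℝ) T, ∀ x : ℝ,
        τ * pdt (q j) t x + σ₀ * (-1 : ℝ) ^ (j + m - 1) * pdx (q (m - j - 1)) t x
          = σ₀ * (-1 : ℝ) ^ (j + m - 1) * q (m - j) t x) →
      (∀ j < m, ∀ x : ℝ, q j 0 x = pdx^[j] u 0 x) →
      ∀ t ∈ Set.Icc (0:ℝ) T,
        Real.sqrt (∫ x in (0:ℝ)..L, (u t x - q 0 t x) ^ 2)
          + (∑ j ∈ Finset.Icc 1 (m - 1), Real.sqrt τ *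
              Real.sqrt (∫ x in (0:ℝ)..L, (pdx^[j] u t x - q j t x) ^ 2))
          ≤ C * τ := by
  obtain ⟨M, hM⟩ := hf''
  have hu1 := contDiff_one_of_smooth hu
  have hc1 : ∀ j, ContDiff ℝ 1 (Function.uncurry (corrector m u j)) := fun j =>
    contDiff_one_of_smooth (contDiff_corrector hu j)
  have hσ' : σ₀ = systemSign m 0 := hσ.trans (systemSign_zero hm2).symm
  obtain ⟨R₀, hR₀⟩ := exists_bound_on_rectangle (continuous_pdx hu1) 0 T 0 L
  obtain ⟨R₁, hR₁⟩ := exists_common_bound_on_rectangle m (fun j _ => (hc1 j).continuous) 0 T 0 L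
  obtain ⟨R₂, hR₂⟩ :=
    exists_common_bound_on_rectangle m (fun j _ => continuous_pdt (hc1 j)) 0 T 0 L
  obtain ⟨R₃, hR₃⟩ :=
    exists_common_bound_on_rectangle m (fun j _ => continuous_pdx (hc1 j)) 0 T 0 L
  set R := max (max R₀ R₁) (max R₂ R₃)
  have h₁ : R₁ ≤ R := (le_max_right _ _).trans (le_max_left _ _)
  set D := Real.exp ((2 * (M * R) + 1) * T) * (m * R ^ 2 * L * (1 + T))
  refine ⟨√D + m * √(2 * D + 2 * R ^ 2 * L) + 1, by positivity, ?_⟩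
  intro τ hτ q hq hqper hq0 hqlow hqhigh hinit t ht
  have hqj : ∀ j ∈ Finset.Icc 1 (m - 1), ∀ t ∈ Set.Icc 0 T, ∀ x,
      τ * pdt (q j) t x + systemSign m j * (pdx (q (m - 1 - j)) t x - q (m - j) t x) = 0 := by
    intro j hj t ht x
    rw [Finset.mem_Icc] at hj
    rw [Nat.sub_right_comm]
    rcases lt_or_ge j (m / 2) with h | h
    · have := hqlow j (Finset.mem_Icc.mpr ⟨hj.1, by lia⟩) t ht x
      rw [hσ] at this
      rw [systemSign_of_lt h]
      linear_combination this
    · have := hqhigh j (Finset.mem_Icc.mpr ⟨h, hj.2⟩) t ht x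
      rw [hσ] at this
      rw [systemSign_of_le hm hj.1 h]
      linear_combination this
  rw [hσ'] at hueq hq0
  have hE := integral_energy_le hm hm2 hL hf hM hu huper hueq (R := R)
    (fun t ht x hx => (hR₀ t ht x hx).trans ((le_max_left _ _).trans (le_max_left _ _)))
    (fun j hj t ht x hx => (hR₁ j hj t ht x hx).trans h₁)
    (fun j hj t ht x hx =>
      (hR₂ j hj t ht x hx).trans ((le_max_left _ _).trans (le_max_right _ _)))
    (fun j hj t ht x hx =>
      (hR₃ j hj t ht x hx).trans ((le_max_right _ _).trans (le_max_right _ _)))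
    hτ hq hqper hq0 hqj hinit ht
  have hwc : ∀ j < m, Continuous (correctedError m u τ q j t) := fun j hj =>
    (contDiff_correctedError hu (hq j hj)).continuous.uncurry_left t
  have hlt : ∀ j ∈ Finset.Icc 1 (m - 1), j < m := fun j hj => by
    have := Finset.mem_Icc.mp hj
    lia
  have hwjc : ∀ j ∈ Finset.Icc 1 (m - 1),
      IntervalIntegrable (fun x => τ * correctedError m u τ q j t x ^ 2) volume 0 L := fun j hj =>
    (((hwc j (hlt j hj)).pow 2).const_mul τ).intervalIntegrable 0 L
  have hsumc : IntervalIntegrable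
      (fun x => ∑ j ∈ Finset.Icc 1 (m - 1), τ * correctedError m u τ q j t x ^ 2) volume 0 L :=
    (continuous_finsetSum _ fun j hj =>
      ((hwc j (hlt j hj)).pow 2).const_mul τ).intervalIntegrable 0 L
  rw [intervalIntegral.integral_add (f := fun x => correctedError m u τ q 0 t x ^ 2)
      (((hwc 0 (by lia)).pow 2).intervalIntegrable 0 L) hsumc,
    intervalIntegral.integral_finsetSum hwjc] at hE
  have hpos : ∀ j ∈ Finset.Icc 1 (m - 1),
      0 ≤ ∫ x in (0 : ℝ)..L, τ * correctedError m u τ q j t x ^ 2 := fun j _ =>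
    intervalIntegral.integral_nonneg hL.le fun x _ => mul_nonneg hτ.1.le (sq_nonneg _)
  have hsqrt : ∀ {a c : ℝ}, a ≤ c * τ ^ 2 → √a ≤ √c * τ := fun {a c} h =>
    (Real.sqrt_le_sqrt h).trans_eq (by rw [Real.sqrt_mul' _ (sq_nonneg τ), Real.sqrt_sq hτ.1.le])
  have hleading : √(∫ x in (0 : ℝ)..L, (u t x - q 0 t x) ^ 2) ≤ √D * τ := by
    refine hsqrt ?_
    have : ∀ x, (u t x - q 0 t x) ^ 2 = correctedError m u τ q 0 t x ^ 2 := fun x => by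
      rw [correctedError_zero]
      ring
    simp only [this]
    linarith [Finset.sum_nonneg hpos]
  have hderivs : ∀ j ∈ Finset.Icc 1 (m - 1),
      √τ * √(∫ x in (0 : ℝ)..L, (pdx^[j] u t x - q j t x) ^ 2)
        ≤ √(2 * D + 2 * R ^ 2 * L) * τ := by
    intro j hj
    rw [← Real.sqrt_mul hτ.1.le]
    refine hsqrt ?_
    have hpt : ∀ x ∈ Set.Icc 0 L, τ * (pdx^[j] u t x - q j t x) ^ 2
        ≤ 2 * (τ * correctedError m u τ q j t x ^ 2) + 2 * R ^ 2 * τ ^ 2 := by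
      intro x hx
      have h2 := (hR₁ j (hlt j hj) t ht x hx).trans h₁
      have h3 : corrector m u j t x ^ 2 ≤ R ^ 2 := sq_le_sq' (abs_le.mp h2).1 (abs_le.mp h2).2
      have h4 : τ ^ 3 ≤ τ ^ 2 := pow_le_pow_of_le_one hτ.1.le hτ.2 (by norm_num)
      have h5 := mul_le_mul h4 h3 (sq_nonneg _) (sq_nonneg τ)
      have h6 : 0 ≤ τ * (correctedError m u τ q j t x - τ * corrector m u j t x) ^ 2 :=
        mul_nonneg hτ.1.le (sq_nonneg _)
      have h7 : pdx^[j] u t x - q j t x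
          = -(correctedError m u τ q j t x + τ * corrector m u j t x) := by
        rw [correctedError]
        ring
      rw [h7]
      linear_combination 2 * h5 + h6
    have hvc : Continuous (pdx^[j] u t) := (contDiff_iterate_pdx hu j).continuous.uncurry_left t
    have hqc : Continuous (q j t) := (hq j (hlt j hj)).continuous.uncurry_left t
    have hint := intervalIntegral.integral_mono_on hL.le
      ((((hvc.sub hqc).pow 2).const_mul τ).intervalIntegrable 0 L)
      (((hwjc j hj).const_mul 2).add intervalIntegrable_const) hpt
    rw [intervalIntegral.integral_add ((hwjc j hj).const_mul 2) intervalIntegrable_const,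
      intervalIntegral.integral_const_mul, intervalIntegral.integral_const_mul,
      intervalIntegral.integral_const, smul_eq_mul, sub_zero] at hint
    have hj_le := Finset.single_le_sum hpos hj
    have hlead_nonneg : 0 ≤ ∫ x in (0 : ℝ)..L, correctedError m u τ q 0 t x ^ 2 :=
      intervalIntegral.integral_nonneg hL.le fun x _ => sq_nonneg _
    refine hint.trans ?_
    linear_combination 2 * hE + 2 * hj_le + 2 * hlead_nonneg
  have hsum := Finset.sum_le_card_nsmul _ _ _ hderivs
  rw [Nat.card_Icc, nsmul_eq_mul] at hsum
  have hcard : ((m - 1 + 1 - 1 : ℕ) : ℝ) ≤ m := Nat.cast_le.mpr (by lia)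
  have hsum' := mul_le_mul_of_nonneg_right hcard
    (mul_nonneg (Real.sqrt_nonneg (2 * D + 2 * R ^ 2 * L)) hτ.1.le)
  linear_combination hleading + hsum + hsum' + hτ.1.le
end

section
/- Let τ > 0 and a ∈ ℝ, and let A be the real 4×4 matrix ![![a, 0, 0, 1], ![0, 0, −1/τ, 0], ![0, −1/τ, 0, 0], ![1/τ, 0, 0, 0]]. Set λ₁ = −1/τ, λ₂ = 1/τ, λ₃ = (a − √(a² + 4/τ))/2, λ₄ = (a + √(a² + 4/τ))/2, and v₁ = (0, 1, 1, 0), v₂ = (0, −1, 1, 0), v₃ = (τλ₃, 0, 0, 1), v₄ = (τλ₄, 0, 0, 1). Then A vᵢ = λᵢ vᵢ for i = 1, …, 4, and (v₁, v₂, v₃, v₄) is a basis of ℝ⁴; in particular A is diagonalizable over ℝ. -/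
/-- The flux Jacobian of the proposed hyperbolic approximation of the
Kuramoto–Sivashinsky equation has the four real eigenvalues `λ₁, …, λ₄` with
eigenvectors `v₁, …, v₄`, which form a basis of `ℝ⁴`; in particular it is
diagonalizable over `ℝ`. -/
theorem kuramoto_sivashinsky_flux_jacobian_diagonalizable (τ a : ℝ) (hτ : 0 < τ)
    (A : Matrix (Fin 4) (Fin 4) ℝ)
    (hA : A = !![a, 0, 0, 1;
                 0, 0, -1/τ, 0;
                 0, -1/τ, 0, 0;
                 1/τ, 0, 0, 0])
    (l : Fin 4 → ℝ)
    (hl : l = ![-1 / τ,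
                1 / τ,
                (a - Real.sqrt (a ^ 2 + 4 / τ)) / 2,
                (a + Real.sqrt (a ^ 2 + 4 / τ)) / 2])
    (v : Fin 4 → Fin 4 → ℝ)
    (hv : v = ![![0, 1, 1, 0],
                ![0, -1, 1, 0],
                ![τ * l 2, 0, 0, 1],
                ![τ * l 3, 0, 0, 1]]) :
    (∀ i : Fin 4, A.mulVec (v i) = l i • v i) ∧
      LinearIndependent ℝ v ∧
      Submodule.span ℝ (Set.range v) = ⊤ := by
  have hrad : 0 < a ^ 2 + 4 / τ := by positivity
  have hs_pos := Real.sqrt_pos.mpr hrad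
  have hs_sq : τ * Real.sqrt (a ^ 2 + 4 / τ) ^ 2 = τ * a ^ 2 + 4 := by
    rw [Real.sq_sqrt hrad.le]
    field_simp
  generalize Real.sqrt (a ^ 2 + 4 / τ) = s at hl hs_pos hs_sq
  have hl0 : l 0 = -1 / τ := by simp [hl]
  have hl1 : l 1 = 1 / τ := by simp [hl]
  have hl2 : l 2 = (a - s) / 2 := by simp [hl]
  have hl3 : l 3 = (a + s) / 2 := by simp [hl]
  have hli : LinearIndependent ℝ v := by
    rw [Fintype.linearIndependent_iff]
    intro g hg
    have h0 := congrFun hg 0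
    have h1 := congrFun hg 1
    have h2 := congrFun hg 2
    have h3 := congrFun hg 3
    simp [hv, hl2, hl3, Fin.sum_univ_four] at h0 h1 h2 h3
    have hg3 : g 3 = 0 := by
      have h : τ * s * g 3 = 0 := by linear_combination h0 - τ * (a - s) / 2 * h3
      simpa [hτ.ne', hs_pos.ne'] using h
    intro i
    fin_cases i <;> simp <;> linarith
  refine ⟨fun i => ?_, hli, hli.span_eq_top_of_card_eq_finrank' (by simp)⟩
  fin_cases i <;> ext j <;> fin_cases j <;>
    simp [hA, hv, hl0, hl1, hl2, hl3, Matrix.mulVec, dotProduct, Fin.sum_univ_four, neg_div,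
      hτ.ne']
  · linear_combination -hs_sq / 4
  · linear_combination -hs_sq / 4
end
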